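/- Let f : S¹ → ℝ be smooth with Fourier series f(θ) = Σ_{n∈ℤ} f_n e^{inθ}, and for k ≥ 2 set h_k = Σ_{n=1}^{k−1} n(k−n) f_n f_{k−n}. Define g(θ) = 2 Re( Σ_{k=2}^∞ (h_k/(1 − k²)) e^{ikθ} ) (this is the function H (1+∂_θ²)^{−1}(f′ · Hf′)). Then sup_θ |g(θ)| ≤ 4π Σ_{n=1}^∞ n |f_n|². -/

import Mathlib

open MeasureTheory Real

/-- The `n`-th Fourier coefficient of a `2π`-periodic function `f : ℝ → ℝ`. -/
noncomputable def fourierC (f : ℝ → ℝ) (n : ℤ) : ℂ :=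
  (1 / (2 * π)) * ∫ θ in (0:ℝ)..(2 * π), (f θ : ℂ) * Complex.exp (-Complex.I * (n : ℂ) * (θ : ℂ))

/-- The Hilbert transform on the circle, sending `Σ cₙ e^{inθ}` to `Σ (−i sgn n) cₙ e^{inθ}`. -/
noncomputable def hilbertT (f : ℝ → ℝ) (θ : ℝ) : ℝ :=
  (∑' n : ℤ, -Complex.I * ((n.sign : ℤ) : ℂ) * fourierC f n *
    Complex.exp (Complex.I * (n : ℂ) * (θ : ℂ))).re

/-- The coefficient `h_k = Σ_{n=1}^{k−1} n (k−n) f_n f_{k−n}` built from the Fourier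
coefficients of `f`. -/
noncomputable def hCoef (f : ℝ → ℝ) (k : ℤ) : ℂ :=
  ∑ n ∈ Finset.Ioo (0:ℤ) k, (n : ℂ) * ((k : ℂ) - (n : ℂ)) * fourierC f n * fourierC f (k - n)

/-!
By AM-GM and the symmetry `n ↦ k - n`, `|h_k| ≤ ∑_{n<k} n² |f_n|²`. Exchanging the order of
summation and telescoping `1 / (k² - 1) ≤ 1 / (k - 1) - 1 / k` over `k > n` gives
`∑_k |h_k| / (k² - 1) ≤ ∑_n n |f_n|²`, so the Fourier series of `g` converges absolutely and the
bound holds with `2` in place of `4π`. The finiteness of the right-hand side is Parseval's identity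
for `f'`.
-/

section PartialSums

open Finset

lemma sum_range_partialSum_mul_sub {R : Type*} [Ring R] (d w : ℕ → R) (K : ℕ) :
    ∑ k ∈ range K, (∑ i ∈ range (k + 1), d i) * (w k - w (k + 1)) =
      ∑ i ∈ range K, d i * w i - (∑ i ∈ range K, d i) * w K := by
  induction K with
  | zero => simp
  | succ K ih =>
    rw [sum_range_succ, ih, sum_range_succ (fun i => d i * w i), sum_range_succ d]
    noncomm_ring

variable {d w : ℕ → ℝ}

lemma sum_range_partialSum_mul_sub_le_tsum (hd : 0 ≤ d) (hw : 0 ≤ w)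
    (hdw : Summable fun i => d i * w i) (K : ℕ) :
    ∑ k ∈ range K, (∑ i ∈ range (k + 1), d i) * (w k - w (k + 1)) ≤ ∑' i, d i * w i := by
  have boundary_nonneg : 0 ≤ (∑ i ∈ range K, d i) * w K :=
    mul_nonneg (sum_nonneg fun i _ => hd i) (hw K)
  calc ∑ k ∈ range K, (∑ i ∈ range (k + 1), d i) * (w k - w (k + 1))
      ≤ ∑ i ∈ range K, d i * w i := by rw [sum_range_partialSum_mul_sub]; linarith
    _ ≤ ∑' i, d i * w i := hdw.sum_le_tsum _ fun i _ => mul_nonneg (hd i) (hw i)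

lemma partialSum_mul_sub_nonneg (hd : 0 ≤ d) (hw_anti : Antitone w) (k : ℕ) :
    0 ≤ (∑ i ∈ range (k + 1), d i) * (w k - w (k + 1)) :=
  mul_nonneg (sum_nonneg fun i _ => hd i) (sub_nonneg.2 (hw_anti k.le_succ))

lemma summable_partialSum_mul_sub (hd : 0 ≤ d) (hw : 0 ≤ w) (hw_anti : Antitone w)
    (hdw : Summable fun i => d i * w i) :
    Summable fun k => (∑ i ∈ range (k + 1), d i) * (w k - w (k + 1)) :=
  summable_of_sum_range_le (partialSum_mul_sub_nonneg hd hw_anti)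
    (sum_range_partialSum_mul_sub_le_tsum hd hw hdw)

lemma tsum_partialSum_mul_sub_le_tsum (hd : 0 ≤ d) (hw : 0 ≤ w) (hw_anti : Antitone w)
    (hdw : Summable fun i => d i * w i) :
    ∑' k, (∑ i ∈ range (k + 1), d i) * (w k - w (k + 1)) ≤ ∑' i, d i * w i :=
  Real.tsum_le_of_sum_range_le (partialSum_mul_sub_nonneg hd hw_anti)
    (sum_range_partialSum_mul_sub_le_tsum hd hw hdw)

end PartialSums

section Reflection

open Finset

variable {A : Type*} [AddCommGroup A] [PartialOrder A] [IsOrderedAddMonoid A]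
  [LocallyFiniteOrder A]

lemma sum_Ioo_zero_reflect {M : Type*} [AddCommMonoid M] (u : A → M) (k : A) :
    ∑ n ∈ Ioo 0 k, u (k - n) = ∑ n ∈ Ioo 0 k, u n := by
  refine sum_nbij' (k - ·) (k - ·) ?_ ?_ ?_ ?_ ?_ <;> simp +contextual

lemma sum_Ioo_mul_reflect_le_sum_sq (u : A → ℝ) (k : A) :
    ∑ n ∈ Ioo 0 k, u n * u (k - n) ≤ ∑ n ∈ Ioo 0 k, u n ^ 2 := by
  calc ∑ n ∈ Ioo 0 k, u n * u (k - n)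
      ≤ ∑ n ∈ Ioo 0 k, (u n ^ 2 + u (k - n) ^ 2) / 2 :=
        sum_le_sum fun n _ => by linarith [two_mul_le_add_sq (u n) (u (k - n))]
    _ = ∑ n ∈ Ioo 0 k, u n ^ 2 := by
        rw [← sum_div, sum_add_distrib, sum_Ioo_zero_reflect (fun n => u n ^ 2), add_self_div_two]

end Reflection

section EulerSquare

open Finset

lemma sum_Ioo_zero_add_two {M : Type*} [AddCommMonoid M] (u : ℤ → M) (k : ℕ) :
    ∑ n ∈ Ioo (0 : ℤ) (k + 2), u n = ∑ i ∈ range (k + 1), u (i + 1) := by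
  refine sum_nbij' (fun n => (n - 1).toNat) (fun i => i + 1) ?_ ?_ ?_ ?_ ?_ <;>
    simp only [mem_Ioo, mem_range]
  case refine_5 =>
    intro n hn
    congr
    omega
  all_goals omega

/-- The coefficient of `z ^ k` in `(z F'(z))²`, where `F(z) = ∑_{n ≥ 1} c n z ^ n`. The coefficient
`h_k` attached to a function is the case where `c` is its sequence of Fourier coefficients. -/
noncomputable def eulerSqCoeff (c : ℤ → ℂ) (k : ℤ) : ℂ :=
  ∑ n ∈ Ioo (0 : ℤ) k, (n : ℂ) * ((k : ℂ) - (n : ℂ)) * c n * c (k - n)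

lemma hCoef_eq_eulerSqCoeff (f : ℝ → ℝ) : hCoef f = eulerSqCoeff (fourierC f) := rfl

lemma norm_eulerSqCoeff_le_sum_sq (c : ℤ → ℂ) (k : ℤ) :
    ‖eulerSqCoeff c k‖ ≤ ∑ n ∈ Ioo 0 k, ‖n * c n‖ ^ 2 := by
  calc ‖eulerSqCoeff c k‖
      ≤ ∑ n ∈ Ioo 0 k, ‖n * c n‖ * ‖((k - n : ℤ) : ℂ) * c (k - n)‖ :=
        norm_sum_le_of_le _ fun n _ => le_of_eq <| by rw [← norm_mul]; push_cast; ring_nf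
    _ ≤ ∑ n ∈ Ioo 0 k, ‖n * c n‖ ^ 2 := sum_Ioo_mul_reflect_le_sum_sq (fun n => ‖n * c n‖) k

lemma norm_eulerSqCoeff_add_two_le (c : ℤ → ℂ) (k : ℕ) :
    ‖eulerSqCoeff c (k + 2)‖ ≤ ∑ i ∈ range (k + 1), (((i : ℝ) + 1) * ‖c (i + 1)‖) ^ 2 := by
  refine (norm_eulerSqCoeff_le_sum_sq c _).trans_eq ?_
  rw [sum_Ioo_zero_add_two]
  refine sum_congr rfl fun i _ => ?_
  rw [norm_mul, Complex.norm_intCast, Int.cast_add, Int.cast_natCast, Int.cast_one,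
    abs_of_pos i.cast_add_one_pos]

lemma inv_norm_one_sub_add_two_sq_le (k : ℕ) :
    ‖(1 - ((k + 2 : ℤ) : ℂ) ^ 2)‖⁻¹ ≤ ((k : ℝ) + 1)⁻¹ - (((k + 1 : ℕ) : ℝ) + 1)⁻¹ := by
  have norm_eq : ‖(1 - ((k + 2 : ℤ) : ℂ) ^ 2)‖ = ((k : ℝ) + 1) * (k + 3) := by
    have factor : 1 - ((k + 2 : ℤ) : ℂ) ^ 2 = -(((k + 1) * (k + 3) : ℕ) : ℂ) := by push_cast; ring
    rw [factor, norm_neg, Complex.norm_natCast]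
    push_cast
    rfl
  calc ‖(1 - ((k + 2 : ℤ) : ℂ) ^ 2)‖⁻¹
      ≤ (((k : ℝ) + 1) * (k + 2))⁻¹ := by rw [norm_eq]; gcongr; norm_num
    _ = ((k : ℝ) + 1)⁻¹ - (((k + 1 : ℕ) : ℝ) + 1)⁻¹ := by push_cast; field_simp; ring

lemma norm_eulerSqCoeff_div_le (c : ℤ → ℂ) (k : ℕ) :
    ‖eulerSqCoeff c (k + 2) / (1 - ((k + 2 : ℤ) : ℂ) ^ 2)‖ ≤
      (∑ i ∈ range (k + 1), (((i : ℝ) + 1) * ‖c (i + 1)‖) ^ 2) *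
        (((k : ℝ) + 1)⁻¹ - (((k + 1 : ℕ) : ℝ) + 1)⁻¹) := by
  rw [norm_div, div_eq_mul_inv]
  exact mul_le_mul (norm_eulerSqCoeff_add_two_le c k) (inv_norm_one_sub_add_two_sq_le k)
    (inv_nonneg.2 (norm_nonneg _)) (by positivity)

lemma norm_tsum_eulerSqCoeff_div_mul_le {c : ℤ → ℂ}
    (hc : Summable fun n : ℕ => ((n : ℝ) + 1) * ‖c (n + 1)‖ ^ 2) {u : ℕ → ℂ} (hu : ∀ k, ‖u k‖ ≤ 1) :
    ‖∑' k : ℕ, eulerSqCoeff c (k + 2) / (1 - ((k + 2 : ℤ) : ℂ) ^ 2) * u k‖ ≤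
      ∑' n : ℕ, ((n : ℝ) + 1) * ‖c (n + 1)‖ ^ 2 := by
  set d : ℕ → ℝ := fun i => (((i : ℝ) + 1) * ‖c (i + 1)‖) ^ 2
  set w : ℕ → ℝ := fun i => ((i : ℝ) + 1)⁻¹
  have hd : 0 ≤ d := fun i => sq_nonneg _
  have hw : 0 ≤ w := fun i => by positivity
  have hw_anti : Antitone w := fun i j hij => by simp only [w]; gcongr
  have d_mul_w : (fun n : ℕ => ((n : ℝ) + 1) * ‖c (n + 1)‖ ^ 2) = fun i => d i * w i := by
    ext i
    simp only [d, w]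
    field_simp
  rw [d_mul_w] at hc ⊢
  refine (tsum_of_norm_bounded (summable_partialSum_mul_sub hd hw hw_anti hc).hasSum
    fun k => ?_).trans (tsum_partialSum_mul_sub_le_tsum hd hw hw_anti hc)
  rw [norm_mul]
  exact (mul_le_of_le_one_right (norm_nonneg _) (hu k)).trans (norm_eulerSqCoeff_div_le c k)

end EulerSquare

section Parseval

open Set

variable {a b : ℝ} {f f' : ℝ → ℂ}

lemma abs_mul_norm_fourierCoeffOn_le (hab : a < b) (hf : ContinuousOn f (uIcc a b))
    (hff' : ∀ x ∈ Ioo (min a b) (max a b), HasDerivWithinAt f (f' x) (Ioi x) x)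
    (hf' : IntervalIntegrable f' volume a b) (hper : f a = f b) (n : ℤ) :
    |(n : ℝ)| * ‖fourierCoeffOn hab f n‖ ≤ (b - a) / (2 * π) * ‖fourierCoeffOn hab f' n‖ := by
  have length_pos : 0 < b - a := sub_pos.2 hab
  rcases eq_or_ne n 0 with rfl | hn
  · rw [Int.cast_zero, abs_zero, zero_mul]
    exact mul_nonneg (div_nonneg length_pos.le two_pi_pos.le) (norm_nonneg _)
  · have norm_length : ‖(b - a : ℂ)‖ = b - a := by
      rw [← Complex.ofReal_sub, Complex.norm_of_nonneg length_pos.le]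
    rw [fourierCoeffOn_of_hasDeriv_right hab hn hf hff' hf', hper, sub_self, mul_zero, zero_sub]
    simp only [norm_mul, norm_div, norm_neg, norm_one, norm_length, Complex.norm_I,
      Complex.norm_intCast, Complex.norm_real, Complex.norm_two, Real.norm_eq_abs,
      abs_of_pos Real.pi_pos, mul_one]
    apply le_of_eq
    field_simp

lemma summable_sq_mul_norm_fourierCoeffOn_sq (hab : a < b) (hf : ContinuousOn f (uIcc a b))
    (hff' : ∀ x ∈ Ioo (min a b) (max a b), HasDerivWithinAt f (f' x) (Ioi x) x)
    (hf' : MemLp f' 2 (volume.restrict (Ioc a b))) (hper : f a = f b) :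
    Summable fun n : ℤ => (n : ℝ) ^ 2 * ‖fourierCoeffOn hab f n‖ ^ 2 := by
  have hint : IntervalIntegrable f' volume a b :=
    (intervalIntegrable_iff_integrableOn_Ioc_of_le hab.le).2 (hf'.integrable one_le_two)
  refine Summable.of_nonneg_of_le (fun n => by positivity) (fun n => ?_)
    ((hasSum_sq_fourierCoeffOn hab hf').summable.mul_left (((b - a) / (2 * π)) ^ 2))
  rw [← sq_abs (n : ℝ), ← mul_pow, ← mul_pow]
  exact pow_le_pow_left₀ (by positivity)
    (abs_mul_norm_fourierCoeffOn_le hab hf hff' hint hper n) 2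

end Parseval

lemma fourierC_eq_fourierCoeffOn (f : ℝ → ℝ) (n : ℤ) :
    fourierC f n = fourierCoeffOn two_pi_pos (fun x => (f x : ℂ)) n := by
  rw [fourierC, fourierCoeffOn_eq_integral, Complex.real_smul]
  congr 1
  · push_cast
    rw [sub_zero]
  · refine intervalIntegral.integral_congr fun x _ => ?_
    simp only [fourier_coe_apply, smul_eq_mul, sub_zero]
    rw [mul_comm]
    congr 2
    push_cast
    field_simp

lemma summable_succ_mul_norm_fourierC_sq {f : ℝ → ℝ} (hf : ContDiff ℝ 1 f)
    (hper : f 0 = f (2 * π)) :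
    Summable fun n : ℕ => ((n : ℝ) + 1) * ‖fourierC f (n + 1)‖ ^ 2 := by
  have deriv_continuous : Continuous fun x => ((deriv f x : ℝ) : ℂ) :=
    Complex.continuous_ofReal.comp (hf.continuous_deriv le_rfl)
  have deriv_memLp :
      MemLp (fun x => ((deriv f x : ℝ) : ℂ)) 2 (volume.restrict (Set.Ioc 0 (2 * π))) :=
    (memLp_two_iff_integrable_sq_norm deriv_continuous.aestronglyMeasurable).2
      (deriv_continuous.norm.pow 2).integrableOn_Ioc
  have weighted_summable : Summable fun n : ℤ => (n : ℝ) ^ 2 * ‖fourierC f n‖ ^ 2 := by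
    simp only [fourierC_eq_fourierCoeffOn]
    exact summable_sq_mul_norm_fourierCoeffOn_sq two_pi_pos
      (Complex.continuous_ofReal.comp hf.continuous).continuousOn
      (fun x _ => (hf.differentiable one_ne_zero x).hasDerivAt.ofReal_comp.hasDerivWithinAt)
      deriv_memLp (congrArg _ hper)
  have succ_injective : Function.Injective fun n : ℕ => (n : ℤ) + 1 := fun m n h => by
    simpa using h
  refine Summable.of_nonneg_of_le (fun n => by positivity) (fun n => ?_)
    (weighted_summable.comp_injective succ_injective)
  simp only [Function.comp_apply]
  push_cast
  gcongr
  exact le_self_pow₀ (by simp) two_ne_zero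

theorem sup_bound_via_hilbert_double_series_general {c : ℤ → ℂ}
    (hc : Summable fun n : ℕ => ((n : ℝ) + 1) * ‖c (n + 1)‖ ^ 2) (θ : ℝ) :
    |2 * (∑' k : ℕ, eulerSqCoeff c (k + 2) / (1 - ((k + 2 : ℤ) : ℂ) ^ 2) *
        Complex.exp (Complex.I * ((k + 2 : ℤ) : ℂ) * θ)).re| ≤
      2 * ∑' n : ℕ, ((n : ℝ) + 1) * ‖c (n + 1)‖ ^ 2 := by
  have norm_exp_le (k : ℕ) : ‖Complex.exp (Complex.I * ((k + 2 : ℤ) : ℂ) * θ)‖ ≤ 1 := by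
    simp [Complex.norm_exp]
  rw [abs_mul, abs_two]
  gcongr
  exact (Complex.abs_re_le_norm _).trans (norm_tsum_eulerSqCoeff_div_mul_le hc norm_exp_le)

/-- The function `g = H (1+∂²)⁻¹(f′·Hf′)`, given by the Fourier series
`g(θ) = 2 Re Σ_{k≥2} (h_k/(1−k²)) e^{ikθ}`, satisfies `sup_θ |g| ≤ 4π Σ_{n≥1} n |f_n|²`. -/
theorem sup_bound_via_hilbert_double_series (f : ℝ → ℝ)
    (hf : ContDiff ℝ (⊤ : ℕ∞) f)
    (hper : ∀ θ : ℝ, f (θ + 2 * π) = f θ) :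
    ∀ θ : ℝ,
      |2 * (∑' k : ℕ, hCoef f ((k : ℤ) + 2) / (1 - (((k : ℤ) + 2 : ℤ) : ℂ) ^ 2) *
          Complex.exp (Complex.I * (((k : ℤ) + 2 : ℤ) : ℂ) * (θ : ℂ))).re|
        ≤ 4 * π * ∑' n : ℕ, ((n : ℝ) + 1) * ‖fourierC f ((n : ℤ) + 1)‖ ^ 2 := by
  intro θ
  have hends : f 0 = f (2 * π) := by simpa using (hper 0).symm
  have hsum := summable_succ_mul_norm_fourierC_sq (hf.of_le (by simp)) hends
  rw [hCoef_eq_eulerSqCoeff]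
  exact (sup_bound_via_hilbert_double_series_general hsum θ).trans <|
    mul_le_mul_of_nonneg_right (by linarith [pi_gt_three]) (tsum_nonneg fun n => by positivity)
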